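/- Let S and P be symmetric involutions of an n-dimensional real inner product space with dim E₊(S) = r ≥ 2, and define A₋ := n² + (tr S)² − (tr P)² − (tr(SP))² + tr(SPSP) − n + 2n·tr(S) − 2·tr(P)·tr(SP). Then A₋ = 0 if and only if there exists ε ∈ {−1, 1} such that E₊(S) is contained in the ε-eigenspace E_ε(P) of P. -/

import Mathlib

open scoped RealInnerProductSpace
open Module

/-!
A symmetric involution `S` is the reflection `2Q - 1` in `K = E₊(S)`, where `Q` is the orthogonal
projection onto `K`. Substituting this into `A₋` and using `P² = 1`, the terms in `n` and `tr P`
cancel and, with `T = QP|_K` the compression of `P` to `K`,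
`A₋ = 4 (r² - r + tr (T²) - (tr T)²) = 4 ∑_{i ≠ j} (1 - bᵢ bⱼ)`,
where the `bᵢ` are the eigenvalues of the symmetric contraction `T`. As `|bᵢ| ≤ 1`, the sum vanishes
only if all the `bᵢ` are equal to one and the same sign `ε`, i.e. `T = ε`. Since `P` does not
increase norms, `QPx = εx` leaves no room for a component of `Px` orthogonal to `K`, so `Px = εx`.
-/

section PairwiseProducts

theorem sum_offDiag_one_sub_mul {R ι : Type*} [CommRing R] [Fintype ι] (b : ι → R) :
    ∑ p ∈ Finset.univ.offDiag, (1 - b p.1 * b p.2) =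
      (Fintype.card ι : R) ^ 2 - Fintype.card ι + ∑ i, b i ^ 2 - (∑ i, b i) ^ 2 := by
  classical
  have h_all : ∑ p : ι × ι, (1 - b p.1 * b p.2) = (Fintype.card ι : R) ^ 2 - (∑ i, b i) ^ 2 := by
    simp [Fintype.sum_prod_type, Finset.sum_mul_sum, sq]
  have h_diag : ∑ p ∈ Finset.univ.diag, (1 - b p.1 * b p.2) =
      (Fintype.card ι : R) - ∑ i, b i ^ 2 := by
    simp [Finset.sum_diag, sq]
  have h_split := Finset.sum_union (Finset.disjoint_diag_offDiag (Finset.univ : Finset ι))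
    (f := fun p ↦ 1 - b p.1 * b p.2)
  rw [Finset.diag_union_offDiag, Finset.univ_product_univ, h_all, h_diag] at h_split
  linear_combination -h_split

variable {R : Type*} [CommRing R] [LinearOrder R] [IsStrictOrderedRing R]

theorem mul_le_one_of_abs_le_one {x y : R} (hx : |x| ≤ 1) (hy : |y| ≤ 1) : x * y ≤ 1 :=
  (le_abs_self _).trans (abs_mul x y ▸ mul_le_one₀ hx (abs_nonneg y) hy)

theorem eq_of_abs_le_one_of_mul_eq_one {x y : R} (hx : |x| ≤ 1) (hy : |y| ≤ 1)
    (hxy : x * y = 1) : x = y := by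
  have hx_sq : x ^ 2 ≤ 1 := (sq_le_one_iff_abs_le_one x).2 hx
  have hy_sq : y ^ 2 ≤ 1 := (sq_le_one_iff_abs_le_one y).2 hy
  have h_sq : (x - y) ^ 2 ≤ 0 := by linear_combination hx_sq + hy_sq - 2 * hxy
  exact sub_eq_zero.1 (sq_nonpos_iff _ |>.1 h_sq)

theorem exists_sign_forall_eq_of_pairwise_mul_eq_one {ι : Type*} [Fintype ι] {b : ι → R}
    (hι : Fintype.card ι ≠ 1) (hb : ∀ i, |b i| ≤ 1) (h : Pairwise fun i j ↦ b i * b j = 1) :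
    ∃ ε : R, (ε = -1 ∨ ε = 1) ∧ ∀ i, b i = ε := by
  rcases isEmpty_or_nonempty ι with _ | ⟨⟨i⟩⟩
  · exact ⟨1, .inr rfl, isEmptyElim⟩
  have h_eq (j : ι) : b j = b i := by
    rcases eq_or_ne j i with rfl | hji
    · rfl
    · exact eq_of_abs_le_one_of_mul_eq_one (hb j) (hb i) (h hji)
  have : Nontrivial ι :=
    Fintype.one_lt_card_iff_nontrivial.1 (hι.symm.lt_of_le (Fintype.card_pos_iff.2 ⟨i⟩))
  obtain ⟨j, hji⟩ := exists_ne i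
  have h_sq : b i * b i = 1 := by simpa only [h_eq j] using h hji
  exact ⟨b i, (mul_self_eq_one_iff.1 h_sq).symm, h_eq⟩

theorem exists_sign_forall_eq_of_card_sq_sub_eq_zero {ι : Type*} [Fintype ι] {b : ι → R}
    (hι : Fintype.card ι ≠ 1) (hb : ∀ i, |b i| ≤ 1)
    (h : (Fintype.card ι : R) ^ 2 - Fintype.card ι + ∑ i, b i ^ 2 - (∑ i, b i) ^ 2 = 0) :
    ∃ ε : R, (ε = -1 ∨ ε = 1) ∧ ∀ i, b i = ε := by
  have h_nonneg : ∀ p ∈ Finset.univ.offDiag, 0 ≤ 1 - b p.1 * b p.2 := fun p _ ↦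
    sub_nonneg.2 (mul_le_one_of_abs_le_one (hb p.1) (hb p.2))
  rw [← sum_offDiag_one_sub_mul, Finset.sum_eq_zero_iff_of_nonneg h_nonneg] at h
  refine exists_sign_forall_eq_of_pairwise_mul_eq_one hι hb fun i j hij ↦ ?_
  exact (sub_eq_zero.1 (h (i, j) (by simpa using hij))).symm

end PairwiseProducts

section TraceIdentity

variable {R M : Type*} [CommRing R] [AddCommGroup M] [Module R M]

/-- The trace combination `A₋` of two endomorphisms `S` and `P`, with `n = finrank R M`. -/
noncomputable def aMinus (S P : M →ₗ[R] M) : R :=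
  (finrank R M : R) ^ 2 + LinearMap.trace R M S ^ 2 - LinearMap.trace R M P ^ 2
    - LinearMap.trace R M (S ∘ₗ P) ^ 2 + LinearMap.trace R M (S ∘ₗ P ∘ₗ S ∘ₗ P)
    - (finrank R M : R) + 2 * (finrank R M : R) * LinearMap.trace R M S
    - 2 * LinearMap.trace R M P * LinearMap.trace R M (S ∘ₗ P)

theorem aMinus_two_smul_sub_one [Module.Free R M] [Module.Finite R M]
    (Q : M →ₗ[R] M) {P : M →ₗ[R] M} (hP : Function.Involutive P) :
    aMinus ((2 : R) • Q - 1) P =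
      4 * (LinearMap.trace R M Q ^ 2 - LinearMap.trace R M Q
        + LinearMap.trace R M (Q ∘ₗ P ∘ₗ Q ∘ₗ P) - LinearMap.trace R M (Q ∘ₗ P) ^ 2) := by
  have hPP : P * P = 1 := LinearMap.ext hP
  have h_comp : ((2 : R) • Q - 1) * P = (2 : R) • (Q * P) - P := by
    rw [sub_mul, smul_mul_assoc, one_mul]
  have h_quad : ((2 : R) • Q - 1) * (P * (((2 : R) • Q - 1) * P)) =
      (4 : R) • (Q * (P * (Q * P))) - (2 : R) • Q - (2 : R) • (P * (Q * P)) + 1 := by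
    rw [h_comp]
    simp only [sub_mul, mul_sub, smul_mul_assoc, mul_smul_comm, one_mul, hPP, mul_one]
    module
  have h_conj : LinearMap.trace R M (P * (Q * P)) = LinearMap.trace R M Q := by
    rw [LinearMap.trace_mul_comm, mul_assoc, hPP, mul_one]
  simp only [aMinus, ← End.mul_eq_comp]
  rw [h_quad, h_comp]
  simp only [h_conj, map_add, map_sub, map_smul, smul_eq_mul, LinearMap.trace_one]
  ring

end TraceIdentity

section InnerProductSpace

variable {𝕜 V : Type*} [RCLike 𝕜] [NormedAddCommGroup V] [InnerProductSpace 𝕜 V]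

section Involution

variable {S : V →ₗ[𝕜] V}

theorem norm_apply_of_isSymmetric_of_involutive (hS : S.IsSymmetric)
    (hS_inv : Function.Involutive S) (x : V) : ‖S x‖ = ‖x‖ := by
  rw [norm_eq_sqrt_re_inner (𝕜 := 𝕜), hS, hS_inv, ← norm_eq_sqrt_re_inner]

theorem reflection_eigenspace_one_of_isSymmetric_of_involutive
    [(End.eigenspace S (1 : 𝕜)).HasOrthogonalProjection] (hS : S.IsSymmetric)
    (hS_inv : Function.Involutive S) (x : V) : (End.eigenspace S (1 : 𝕜)).reflection x = S x := by
  set K := End.eigenspace S (1 : 𝕜)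
  have h_fixed : x + S x ∈ K := by
    rw [End.mem_eigenspace_iff, one_smul, map_add, hS_inv, add_comm]
  have h_negated : x - S x ∈ Kᗮ := by
    intro y hy
    have hSy : S y = y := by rwa [End.mem_eigenspace_iff, one_smul] at hy
    rw [inner_sub_right, ← hS, hSy, sub_self]
  have h_split : x = (2⁻¹ : 𝕜) • ((x + S x) + (x - S x)) := by module
  calc
    K.reflection x = (2⁻¹ : 𝕜) • (K.reflection (x + S x) + K.reflection (x - S x)) := by
      rw [← map_add, ← map_smul, ← h_split]
    _ = (2⁻¹ : 𝕜) • ((x + S x) - (x - S x)) := by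
      rw [K.reflection_mem_subspace_eq_self h_fixed,
        K.reflection_mem_subspace_orthogonalComplement_eq_neg h_negated, ← sub_eq_add_neg]
    _ = S x := by module

end Involution

section SymmetricContraction

variable [FiniteDimensional 𝕜 V] {T : V →ₗ[𝕜] V}

theorem trace_comp_self_eq_sum_eigenvalues_sq {n : ℕ} (hn : finrank 𝕜 V = n)
    (hT : T.IsSymmetric) :
    LinearMap.trace 𝕜 V (T ∘ₗ T) = ∑ i, (hT.eigenvalues hn i : 𝕜) ^ 2 := by
  rw [LinearMap.trace_eq_sum_inner _ (hT.eigenvectorBasis hn)]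
  refine Finset.sum_congr rfl fun i _ ↦ ?_
  simp [inner_smul_right, sq]

theorem abs_eigenvalues_le_one {n : ℕ} (hn : finrank 𝕜 V = n) (hT : T.IsSymmetric)
    (hT_le : ∀ x, ‖T x‖ ≤ ‖x‖) (i : Fin n) : |hT.eigenvalues hn i| ≤ 1 := by
  simpa [norm_smul] using hT_le (hT.eigenvectorBasis hn i)

theorem finrank_sq_sub_trace_eq_zero_iff_exists_sign (hV : finrank 𝕜 V ≠ 1)
    (hT : T.IsSymmetric) (hT_le : ∀ x, ‖T x‖ ≤ ‖x‖) :
    (finrank 𝕜 V : 𝕜) ^ 2 - finrank 𝕜 V + LinearMap.trace 𝕜 V (T ∘ₗ T)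
        - LinearMap.trace 𝕜 V T ^ 2 = 0 ↔
      ∃ ε : 𝕜, (ε = -1 ∨ ε = 1) ∧ T = ε • LinearMap.id := by
  constructor
  · intro h
    rw [trace_comp_self_eq_sum_eigenvalues_sq rfl hT, hT.trace_eq_sum_eigenvalues rfl] at h
    obtain ⟨ε, hε, hb⟩ := exists_sign_forall_eq_of_card_sq_sub_eq_zero
      (by simpa using hV) (abs_eigenvalues_le_one rfl hT hT_le) (by simpa using mod_cast h)
    refine ⟨ε, mod_cast hε, (hT.eigenvectorBasis rfl).toBasis.ext fun i ↦ ?_⟩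
    simp [hb]
  · rintro ⟨ε, rfl | rfl, rfl⟩ <;> simp

end SymmetricContraction

section Compression

variable (K : Submodule 𝕜 V) [K.HasOrthogonalProjection] (P : V →ₗ[𝕜] V)

/-- The compression of an operator `P` to a subspace `K`: restrict `P` to `K`, then project
orthogonally back onto `K`. -/
noncomputable def compression : K →ₗ[𝕜] K :=
  K.orthogonalProjectionOnto.toLinearMap ∘ₗ P ∘ₗ K.subtype

theorem compression_apply (x : K) : compression K P x = K.orthogonalProjectionOnto (P x) := rfl

variable {P}

theorem isSymmetric_compression (hP : P.IsSymmetric) : (compression K P).IsSymmetric := by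
  intro x y
  simp [compression_apply, hP _ _]

theorem norm_compression_apply_le (hP : ∀ x, ‖P x‖ ≤ ‖x‖) (x : K) :
    ‖compression K P x‖ ≤ ‖x‖ :=
  (K.norm_orthogonalProjectionOnto_apply_le _).trans (hP x)

theorem compression_eq_smul_id_iff_le_eigenspace (hP : ∀ x, ‖P x‖ ≤ ‖x‖) {ε : 𝕜} (hε : ‖ε‖ = 1) :
    compression K P = ε • LinearMap.id ↔ K ≤ End.eigenspace P ε := by
  constructor
  · intro h x hx
    have h_proj : K.starProjection (P x) = ε • x :=
      congrArg Subtype.val (LinearMap.congr_fun h ⟨x, hx⟩)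
    have h_mem : P x ∈ K := by
      have h_le : ‖P x‖ ≤ ‖K.starProjection (P x)‖ := by
        simpa [h_proj, norm_smul, hε] using hP x
      exact (K.mem_iff_norm_starProjection _).2 (h_le.antisymm' (K.norm_starProjection_apply_le _))
    rw [End.mem_eigenspace_iff, ← h_proj, K.starProjection_eq_self_iff.2 h_mem]
  · intro h
    ext x
    simp [compression_apply, End.mem_eigenspace_iff.1 (h x.2)]

end Compression

section Reflection

variable [FiniteDimensional 𝕜 V] (K : Submodule 𝕜 V) {P : V →ₗ[𝕜] V}

theorem aMinus_reflection (hP : Function.Involutive P) :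
    aMinus K.reflection.toLinearMap P =
      4 * ((finrank 𝕜 K : 𝕜) ^ 2 - finrank 𝕜 K
        + LinearMap.trace 𝕜 K (compression K P ∘ₗ compression K P)
        - LinearMap.trace 𝕜 K (compression K P) ^ 2) := by
  let π : V →ₗ[𝕜] K := K.orthogonalProjectionOnto.toLinearMap
  have h_refl : K.reflection.toLinearMap = (2 : 𝕜) • (K.subtype ∘ₗ π) - 1 := by
    ext x
    simp [π, Submodule.reflection_apply, two_smul]
  have h_tr : LinearMap.trace 𝕜 V (K.subtype ∘ₗ π) = finrank 𝕜 K := by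
    have h_id : π ∘ₗ K.subtype = LinearMap.id := by
      ext x
      simp [π]
    rw [LinearMap.trace_comp_comm', h_id, LinearMap.trace_id]
  have h_tr_comp : LinearMap.trace 𝕜 V ((K.subtype ∘ₗ π) ∘ₗ P) =
      LinearMap.trace 𝕜 K (compression K P) := by
    rw [LinearMap.comp_assoc, LinearMap.trace_comp_comm']
    rfl
  have h_tr_quad : LinearMap.trace 𝕜 V ((K.subtype ∘ₗ π) ∘ₗ P ∘ₗ (K.subtype ∘ₗ π) ∘ₗ P) =
      LinearMap.trace 𝕜 K (compression K P ∘ₗ compression K P) := by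
    rw [LinearMap.comp_assoc, LinearMap.trace_comp_comm']
    rfl
  rw [h_refl, aMinus_two_smul_sub_one _ hP, h_tr, h_tr_comp, h_tr_quad]

theorem aMinus_reflection_eq_zero_iff (hP : P.IsSymmetric) (hP_inv : Function.Involutive P)
    (hK : finrank 𝕜 K ≠ 1) :
    aMinus K.reflection.toLinearMap P = 0 ↔
      ∃ ε : 𝕜, (ε = -1 ∨ ε = 1) ∧ K ≤ End.eigenspace P ε := by
  have hP_norm (x : V) : ‖P x‖ ≤ ‖x‖ := (norm_apply_of_isSymmetric_of_involutive hP hP_inv x).le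
  rw [aMinus_reflection K hP_inv, mul_eq_zero_iff_left (by norm_num),
    finrank_sq_sub_trace_eq_zero_iff_exists_sign hK (isSymmetric_compression K hP)
      (norm_compression_apply_le K hP_norm)]
  refine exists_congr fun ε ↦ and_congr_right fun hε ↦ ?_
  exact compression_eq_smul_id_iff_le_eigenspace K hP_norm (by rcases hε with rfl | rfl <;> simp)

end Reflection

theorem A_minus_eq_zero_iff_general [FiniteDimensional 𝕜 V] {S P : V →ₗ[𝕜] V}
    (hS : S.IsSymmetric) (hS_inv : Function.Involutive S)
    (hP : P.IsSymmetric) (hP_inv : Function.Involutive P)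
    (hr : finrank 𝕜 (End.eigenspace S (1 : 𝕜)) ≠ 1) :
    aMinus S P = 0 ↔
      ∃ ε : 𝕜, (ε = -1 ∨ ε = 1) ∧ End.eigenspace S (1 : 𝕜) ≤ End.eigenspace P ε := by
  have hS_eq : (End.eigenspace S (1 : 𝕜)).reflection.toLinearMap = S :=
    LinearMap.ext (reflection_eigenspace_one_of_isSymmetric_of_involutive hS hS_inv)
  simpa only [hS_eq] using aMinus_reflection_eq_zero_iff _ hP hP_inv hr

end InnerProductSpace

/-- Let `S` and `P` be symmetric involutions of an `n`-dimensional real inner product space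
with `dim E₊(S) = r ≥ 2`, and define
`A₋ := n² + (tr S)² − (tr P)² − (tr(SP))² + tr(SPSP) − n + 2n·tr(S) − 2·tr(P)·tr(SP)`.
Then `A₋ = 0` if and only if there exists `ε ∈ {−1, 1}` such that `E₊(S)` is contained in
the `ε`-eigenspace `E_ε(P)` of `P`. -/
theorem A_minus_eq_zero_iff {V : Type*} [NormedAddCommGroup V]
    [InnerProductSpace ℝ V] [FiniteDimensional ℝ V] (n r : ℕ)
    (hn : finrank ℝ V = n) (S P : V →ₗ[ℝ] V)
    (hSsym : ∀ x y : V, ⟪S x, y⟫ = ⟪x, S y⟫) (hSinv : ∀ x : V, S (S x) = x)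
    (hPsym : ∀ x y : V, ⟪P x, y⟫ = ⟪x, P y⟫) (hPinv : ∀ x : V, P (P x) = x)
    (hr : finrank ℝ ↥(Module.End.eigenspace S (1 : ℝ)) = r) (hr2 : 2 ≤ r) :
    ((n : ℝ) ^ 2 + (LinearMap.trace ℝ V S) ^ 2 - (LinearMap.trace ℝ V P) ^ 2
        - (LinearMap.trace ℝ V (S ∘ₗ P)) ^ 2 + LinearMap.trace ℝ V (S ∘ₗ P ∘ₗ S ∘ₗ P)
        - (n : ℝ) + 2 * (n : ℝ) * LinearMap.trace ℝ V S
        - 2 * LinearMap.trace ℝ V P * LinearMap.trace ℝ V (S ∘ₗ P) = 0) ↔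
      ∃ ε : ℝ, (ε = -1 ∨ ε = 1) ∧
        Module.End.eigenspace S (1 : ℝ) ≤ Module.End.eigenspace P ε := by
  subst hn hr
  exact A_minus_eq_zero_iff_general hSsym hSinv hPsym hPinv (by omega)
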